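/- (Skew Hensel's lemma.) Let f ∈ A[t,σ,δ] be a monic polynomial of degree d in t. Let g, h ∈ A[t,σ,δ] be monic polynomials of respective degrees m and d−m such that f̄ = ḡ·h̄ in K[t], and such that for every integer n ≥ 1 the residue polynomials ḡ and (h^{φⁿ})‾ are relatively prime in K[t]. Then there exist monic polynomials ĝ, ĥ ∈ A[t,σ,δ] of respective degrees m and d−m with ĝ‾ = ḡ and ĥ‾ = h̄, such that f = ĝ·ĥ. -/

import Mathlib

/-- `δ` is a `σ`-derivation of `A`: an additive map satisfying the Leibniz rule
`δ(ab) = σ(a)δ(b) + δ(a)b`. -/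
def IsSigmaDerivation {A : Type*} [Ring A] (σ : A →+* A) (δ : A → A) : Prop :=
  (∀ a b : A, δ (a + b) = δ a + δ b) ∧ (∀ a b : A, δ (a * b) = σ a * δ b + δ a * b)

/-- `R` is a skew polynomial ring `A[t,σ,δ]`: `A` embeds in `R` via `ι`, the variable
`t` satisfies `t·a = σ(a)·t + δ(a)`, and every element of `R` is uniquely a finite sum
`Σ ι(aᵢ) tⁱ`. -/
structure IsSkewPolyRing (A : Type*) [Ring A] (σ : A →+* A) (δ : A → A)
    (R : Type*) [Ring R] (ι : A →+* R) (t : R) : Prop where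
  t_mul : ∀ a : A, t * ι a = ι (σ a) * t + ι (δ a)
  exists_repr : ∀ r : R, ∃ c : ℕ →₀ A, r = ∑ i ∈ c.support, ι (c i) * t ^ i
  unique_repr : ∀ c c' : ℕ →₀ A,
    (∑ i ∈ c.support, ι (c i) * t ^ i) = (∑ i ∈ c'.support, ι (c' i) * t ^ i) → c = c'

/-- `p` is a skew polynomial of degree `< k`. -/
def SkD {A R : Type*} [Ring A] [Ring R] (ι : A →+* R) (t : R) (k : ℕ) (p : R) : Prop :=
  ∃ c : ℕ → A, p = ∑ i ∈ Finset.range k, ι (c i) * t ^ i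

section sk
variable {A R : Type*} [Ring A] [Ring R] {ι : A →+* R} {t : R}

lemma SkD.zero (k : ℕ) : SkD ι t k 0 := ⟨0, by simp⟩

lemma SkD.add {k : ℕ} {p q : R} (hp : SkD ι t k p) (hq : SkD ι t k q) : SkD ι t k (p + q) := by
  obtain ⟨c, rfl⟩ := hp
  obtain ⟨e, rfl⟩ := hq
  exact ⟨fun i => c i + e i, by simp [add_mul, Finset.sum_add_distrib]⟩

lemma SkD.sub {k : ℕ} {p q : R} (hp : SkD ι t k p) (hq : SkD ι t k q) : SkD ι t k (p - q) := by
  obtain ⟨c, rfl⟩ := hp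
  obtain ⟨e, rfl⟩ := hq
  exact ⟨fun i => c i - e i, by simp [sub_mul, Finset.sum_sub_distrib]⟩

lemma SkD.sum {k : ℕ} (s : Finset ℕ) (F : ℕ → R) (h : ∀ i ∈ s, SkD ι t k (F i)) :
    SkD ι t k (∑ i ∈ s, F i) := by
  classical
  induction s using Finset.induction_on with
  | empty => simpa using SkD.zero k
  | insert a s ha ih =>
    rw [Finset.sum_insert ha]
    exact (h _ (by simp)).add (ih fun i hi => h i (by simp [hi]))

lemma SkD.smul {k : ℕ} {p : R} (a : A) (hp : SkD ι t k p) : SkD ι t k (ι a * p) := by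
  obtain ⟨c, rfl⟩ := hp
  exact ⟨fun i => a * c i, by simp [Finset.mul_sum, mul_assoc]⟩

lemma SkD.mono1 {k : ℕ} (a : A) {i : ℕ} (h : i < k) : SkD ι t k (ι a * t ^ i) := by
  refine ⟨fun j => if j = i then a else 0, ?_⟩
  rw [Finset.sum_eq_single i]
  · simp
  · intro b _ hb; simp [hb]
  · intro hh; simp at hh; omega

lemma SkD.pow {k : ℕ} {i : ℕ} (h : i < k) : SkD ι t k (t ^ i) := by
  simpa using SkD.mono1 (ι := ι) (t := t) 1 h

lemma SkD.mono {k l : ℕ} (h : k ≤ l) {p : R} (hp : SkD ι t k p) : SkD ι t l p := by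
  obtain ⟨c, rfl⟩ := hp
  exact SkD.sum _ _ fun i hi => SkD.mono1 _ (by simp at hi; omega)

lemma SkD.mul_pow {k : ℕ} {p : R} (j : ℕ) (hp : SkD ι t k p) : SkD ι t (k + j) (p * t ^ j) := by
  obtain ⟨c, rfl⟩ := hp
  rw [Finset.sum_mul]
  refine SkD.sum _ _ fun i hi => ?_
  rw [mul_assoc, ← pow_add]
  exact SkD.mono1 _ (by simp at hi; omega)

variable {σ : A →+* A} {δ : A → A}

lemma SkD.t_mul (hR : IsSkewPolyRing A σ δ R ι t)
    {k : ℕ} {p : R} (hp : SkD ι t k p) : SkD ι t (k + 1) (t * p) := by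
  obtain ⟨c, rfl⟩ := hp
  rw [Finset.mul_sum]
  refine SkD.sum _ _ fun i hi => ?_
  simp at hi
  rw [← mul_assoc, hR.t_mul, add_mul, mul_assoc, ← pow_succ']
  exact (SkD.mono1 _ (by omega)).add (SkD.mono1 _ (by omega))

lemma SkD.pow_mul (hR : IsSkewPolyRing A σ δ R ι t)
    {k : ℕ} {p : R} (j : ℕ) (hp : SkD ι t k p) : SkD ι t (k + j) (t ^ j * p) := by
  induction j with
  | zero => simpa using hp
  | succ j ih => rw [pow_succ', mul_assoc]; exact ih.t_mul hR

lemma SkD.mul_right (hR : IsSkewPolyRing A σ δ R ι t)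
    {k l : ℕ} {p q : R} (hp : SkD ι t k p) (hq : SkD ι t (l + 1) q) :
    SkD ι t (k + l) (p * q) := by
  obtain ⟨c, rfl⟩ := hp
  rw [Finset.sum_mul]
  refine SkD.sum _ _ fun i hi => ?_
  simp at hi
  rw [mul_assoc]
  exact ((hq.pow_mul hR i).smul _).mono (by omega)

lemma SkD.mul_left (hR : IsSkewPolyRing A σ δ R ι t)
    {k l : ℕ} {p q : R} (hp : SkD ι t (k + 1) p) (hq : SkD ι t l q) :
    SkD ι t (k + l) (p * q) := by
  obtain ⟨c, rfl⟩ := hp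
  rw [Finset.sum_mul]
  refine SkD.sum _ _ fun i hi => ?_
  simp at hi
  rw [mul_assoc]
  exact ((hq.pow_mul hR i).smul _).mono (by omega)

lemma SkD.mul_C (hR : IsSkewPolyRing A σ δ R ι t)
    {k : ℕ} {p : R} (hp : SkD ι t k p) (a : A) : SkD ι t k (p * ι a) := by
  have : SkD ι t 1 (ι a) := by simpa using SkD.mono1 (ι := ι) (t := t) a (i := 0) (k := 1) (by omega)
  simpa using hp.mul_right hR (l := 0) this

lemma SkD.exists (hR : IsSkewPolyRing A σ δ R ι t)
    (p : R) : ∃ k, SkD ι t k p := by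
  obtain ⟨c, rfl⟩ := hR.exists_repr p
  refine ⟨c.support.sup id + 1, SkD.sum _ _ fun i hi => SkD.mono1 _ ?_⟩
  exact Nat.lt_succ_of_le (Finset.le_sup (f := id) hi)

lemma SkD.unique (hR : IsSkewPolyRing A σ δ R ι t)
    {k : ℕ} {c e : ℕ → A}
    (h : ∑ i ∈ Finset.range k, ι (c i) * t ^ i = ∑ i ∈ Finset.range k, ι (e i) * t ^ i) :
    ∀ i < k, c i = e i := by
  classical
  have key : ∀ c : ℕ → A, ∃ c' : ℕ →₀ A, (∀ i < k, c' i = c i) ∧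
      ∑ i ∈ c'.support, ι (c' i) * t ^ i = ∑ i ∈ Finset.range k, ι (c i) * t ^ i := by
    intro c
    refine ⟨Finsupp.onFinset (Finset.range k) (fun i => if i < k then c i else 0) ?_, ?_, ?_⟩
    · intro a ha
      by_contra hh
      simp at hh
      exact ha (by simp; omega)
    · intro i hi; simp [hi]
    · rw [Finset.sum_subset (s₂ := Finset.range k)]
      · exact Finset.sum_congr rfl fun i hi => by simp at hi; simp [hi]
      · intro i hi
        by_contra hh
        simp at hi hh
        omega
      · intro i _ hi
        rw [Finsupp.notMem_support_iff.mp hi]; simp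
  obtain ⟨c', h1, h2⟩ := key c
  obtain ⟨e', h3, h4⟩ := key e
  intro i hi
  rw [← h1 i hi, ← h3 i hi, hR.unique_repr c' e' (by rw [h2, h4, h])]

lemma SkD.cancel (hR : IsSkewPolyRing A σ δ R ι t)
    [IsDomain A] {a : A} (ha : a ≠ 0) {p : R} (h : ι a * p = 0) : p = 0 := by
  obtain ⟨k, c, rfl⟩ := SkD.exists hR p
  refine Finset.sum_eq_zero fun i hi => ?_
  have := SkD.unique hR (k := k) (c := fun i => a * c i) (e := 0)
    (by simpa [Finset.mul_sum, mul_assoc] using h) i (by simpa using hi)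
  have : c i = 0 := by simpa [ha] using this
  simp [this]

lemma SkD.of_smul (hR : IsSkewPolyRing A σ δ R ι t)
    [IsDomain A] {a : A} (ha : a ≠ 0) {k : ℕ} {p : R} (h : SkD ι t k (ι a * p)) :
    SkD ι t k p := by
  obtain ⟨l, c, rfl⟩ := SkD.exists hR p
  obtain ⟨e, he⟩ := h
  refine SkD.sum _ _ fun i hi => ?_
  by_cases hik : i < k
  · exact SkD.mono1 _ hik
  have h2 : ∑ i ∈ Finset.range (l + k), ι (if i < l then a * c i else 0) * t ^ i =
    ∑ i ∈ Finset.range (l + k), ι (if i < k then e i else 0) * t ^ i := by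
    rw [← Finset.sum_subset (s₁ := Finset.range l), ← Finset.sum_subset (s₁ := Finset.range k)
      (s₂ := Finset.range (l + k))]
    · rw [Finset.mul_sum] at he
      refine Eq.trans ?_ (he.trans ?_)
      · exact Finset.sum_congr rfl fun i hi => by simp at hi; simp [hi, mul_assoc]
      · exact Finset.sum_congr rfl fun i hi => by simp at hi; simp [hi]
    · intro i hi; rw [Finset.mem_range] at hi ⊢; omega
    · intro i _ hi; rw [Finset.mem_range] at hi; simp [hi]
    · intro i hi; rw [Finset.mem_range] at hi ⊢; omega
    · intro i _ hi; rw [Finset.mem_range] at hi; simp [hi]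
  simp at hi
  have := SkD.unique hR h2 i (by omega)
  simp [hi, hik, ha] at this
  simpa [this] using SkD.zero k

/-- monic times monic -/
lemma SkD.monic_mul (hR : IsSkewPolyRing A σ δ R ι t)
    {m l : ℕ} {G H : R} (hG : SkD ι t m (G - t ^ m)) (hH : SkD ι t l (H - t ^ l)) :
    SkD ι t (m + l) (G * H - t ^ (m + l)) := by
  have hH' : SkD ι t (l + 1) H := by
    have := (hH.mono (Nat.le_succ l)).add (SkD.pow (i := l) (Nat.lt_succ_self l))
    simpa using this
  have e : G * H - t ^ (m + l) = (G - t ^ m) * H + t ^ m * (H - t ^ l) := by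
    rw [pow_add]; noncomm_ring
  rw [e]
  exact (hG.mul_right hR hH').add ((hH.pow_mul hR m).mono (by omega))

variable {K : Type*} [Field K] {π : A →+* K} {red : R →+* Polynomial K}

lemma SkD.red_sum (hred : ∀ a : A, red (ι a) = Polynomial.C (π a))
    (hredt : red t = Polynomial.X) {k : ℕ} (c : ℕ → A) : red (∑ i ∈ Finset.range k, ι (c i) * t ^ i) =
    ∑ i ∈ Finset.range k, Polynomial.C (π (c i)) * Polynomial.X ^ i := by
  simp [hred, hredt]

lemma SkD.red_div (hred : ∀ a : A, red (ι a) = Polynomial.C (π a))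
    (hredt : red t = Polynomial.X) {x : A} (hker : ∀ a : A, π a = 0 ↔ ∃ b : A, a = x * b) {k : ℕ} {p : R}
    (hp : SkD ι t k p) (h : red p = 0) : ∃ q, SkD ι t k q ∧ p = ι x * q := by
  obtain ⟨c, rfl⟩ := hp
  rw [SkD.red_sum hred hredt] at h
  have h1 : ∀ i, ∃ b, i < k → c i = x * b := by
    intro i
    by_cases hi : i < k
    · have := congrArg (fun p => Polynomial.coeff p i) h
      simp [Polynomial.finsetSum_coeff, Polynomial.coeff_X_pow, hi] at this
      obtain ⟨b, hb⟩ := (hker _).1 this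
      exact ⟨b, fun _ => hb⟩
    · exact ⟨0, fun h => absurd h hi⟩
  choose b hb using h1
  refine ⟨_, ⟨b, rfl⟩, ?_⟩
  rw [Finset.mul_sum]
  exact Finset.sum_congr rfl fun i hi => by rw [hb i (by simpa using hi), map_mul, mul_assoc]

lemma SkD.red_lift (hred : ∀ a : A, red (ι a) = Polynomial.C (π a))
    (hredt : red t = Polynomial.X) (hπ : Function.Surjective π) {k : ℕ} (u : Polynomial K) (hu : u.degree < k) :
    ∃ c : ℕ → A, red (∑ i ∈ Finset.range k, ι (c i) * t ^ i) = u := by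
  choose s hs using hπ
  refine ⟨fun i => s (u.coeff i), ?_⟩
  rw [SkD.red_sum hred hredt]
  ext j
  simp [Polynomial.finsetSum_coeff, Polynomial.coeff_X_pow, hs]
  intro h
  exact (Polynomial.coeff_eq_zero_of_degree_lt (hu.trans_le (by exact_mod_cast h))).symm

lemma SkD.red_surj (hred : ∀ a : A, red (ι a) = Polynomial.C (π a))
    (hredt : red t = Polynomial.X) (hπ : Function.Surjective π) (u : Polynomial K) : ∃ p, red p = u := by
  obtain ⟨c, hc⟩ := SkD.red_lift hred hredt hπ (k := u.natDegree + 1) u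
    (by exact Polynomial.degree_lt_iff_coeff_zero _ _ |>.2 fun m hm => Polynomial.coeff_eq_zero_of_natDegree_lt (by omega))
  exact ⟨_, hc⟩

lemma SkD.red_degree (hred : ∀ a : A, red (ι a) = Polynomial.C (π a))
    (hredt : red t = Polynomial.X) {k : ℕ} {p : R} (hp : SkD ι t k p) : (red p).degree < k := by
  obtain ⟨c, rfl⟩ := hp
  rw [SkD.red_sum hred hredt, Polynomial.degree_lt_iff_coeff_zero]
  intro m hm
  simp [Polynomial.finsetSum_coeff, Polynomial.coeff_X_pow, hm]

lemma SkD.red_monic (hred : ∀ a : A, red (ι a) = Polynomial.C (π a))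
    (hredt : red t = Polynomial.X) {k : ℕ} {p : R} (hp : SkD ι t k (p - t ^ k)) :
    (red p).Monic ∧ (red p).degree = k := by
  have h1 := SkD.red_degree hred hredt hp
  have e : red p = Polynomial.X ^ k + red (p - t ^ k) := by simp [hredt]
  rw [e]
  exact ⟨Polynomial.monic_X_pow_add h1, by
    rw [Polynomial.degree_add_eq_left_of_degree_lt (by rw [Polynomial.degree_X_pow]; exact h1),
      Polynomial.degree_X_pow]⟩

end sk

/-- bounded Bezout -/
lemma bezout_bdd {K : Type*} [Field K] {m l : ℕ} {g h r : Polynomial K} (hg : g.degree < (m + 1 : ℕ))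
    (hh : h.Monic) (hl : h.degree = l) (hr : r.degree < (m + l : ℕ)) (hc : IsCoprime g h) :
    ∃ u v : Polynomial K, u.degree < m ∧ v.degree < l ∧ r = u * h + g * v := by
  obtain ⟨a, b, hab⟩ := hc
  set v := (a * r) %ₘ h with hv
  have hdm := Polynomial.modByMonic_add_div (a * r) h
  have hvl : v.degree < l := hl ▸ Polynomial.degree_modByMonic_lt _ hh
  set u := b * r + g * ((a * r) /ₘ h) with hu
  have e : r = u * h + g * v := by
    have : v = a * r - h * ((a * r) /ₘ h) := by rw [hv]; linear_combination hdm
    rw [this, hu]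
    linear_combination (-r) * hab
  refine ⟨u, v, ?_, hvl, e⟩
  have hgv : (g * v).degree < (m + l : ℕ) := by
    rw [Polynomial.degree_mul]
    by_cases hg0 : g = 0
    · simp [hg0]
    by_cases hv0 : v = 0
    · simp [hv0]
    rw [Polynomial.degree_eq_natDegree hg0] at *
    rw [Polynomial.degree_eq_natDegree hv0] at *
    norm_cast at *
    omega
  have huh : (u * h).degree < (m + l : ℕ) := by
    have : u * h = r - g * v := by linear_combination -e
    rw [this]
    exact (Polynomial.degree_sub_le _ _).trans_lt (max_lt hr hgv)
  by_cases hu0 : u = 0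
  · simp [hu0]
  rw [Polynomial.degree_mul, hl, Polynomial.degree_eq_natDegree hu0] at huh
  rw [Polynomial.degree_eq_natDegree hu0]
  norm_cast at *
  omega

/-- **A skew Hensel's lemma.** Let `A` be a (possibly noncommutative) domain, complete and
separated with respect to a two-sided ideal `m = xA = Ax`, with `K = A/m` a (commutative)
field; let `σ` be an endomorphism and `δ` a `σ`-derivation of `A` preserving `m` and
inducing the identity, resp. zero, on `K`; let `R = A[t,σ,δ]`, let `φ` be the automorphism
of `R` with `φ(p)·x = x·p`, and let `red : R → K[t]` be the reduction map. If `f ∈ R` is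
monic of degree `d`, and `g, h ∈ R` are monic of degrees `m` and `d-m` with `f̄ = ḡ·h̄`,
such that `ḡ` and `(φⁿ(h))‾` are relatively prime in `K[t]` for every `n ≥ 1`, then there
are monic `ĝ, ĥ ∈ R` of degrees `m` and `d-m` with `ĝ‾ = ḡ`, `ĥ‾ = h̄` and `f = ĝ·ĥ`. -/
theorem skew_hensel
    (A : Type*) [Ring A] [IsDomain A] (x : A)
    -- m = xA = Ax is a two-sided ideal
    (hxA : ∀ a : A, ∃ b : A, x * a = b * x)
    (hAx : ∀ a : A, ∃ b : A, a * x = x * b)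
    -- A is separated with respect to m
    (hsep : ∀ a : A, (∀ n : ℕ, ∃ b : A, a = x ^ n * b) → a = 0)
    -- A is complete with respect to m
    (hcomp : ∀ f : ℕ → A, (∀ n : ℕ, ∃ b : A, f (n + 1) - f n = x ^ n * b) →
      ∃ a : A, ∀ n : ℕ, ∃ b : A, a - f n = x ^ n * b)
    -- K = A/m is a (commutative) field, via the quotient map π with kernel m
    (K : Type*) [Field K] (π : A →+* K) (hπ : Function.Surjective π)
    (hker : ∀ a : A, π a = 0 ↔ ∃ b : A, a = x * b)
    -- σ and δ, preserving m and inducing the identity resp. zero on K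
    (σ : A →+* A) (δ : A → A) (hδ : IsSigmaDerivation σ δ)
    (hσm : ∀ a b : A, a = x * b → ∃ c : A, σ a = x * c)
    (hδm : ∀ a b : A, a = x * b → ∃ c : A, δ a = x * c)
    (hσK : ∀ a : A, π (σ a) = π a)
    (hδK : ∀ a : A, π (δ a) = 0)
    -- R = A[t,σ,δ]
    (R : Type*) [Ring R] (ι : A →+* R) (t : R)
    (hR : IsSkewPolyRing A σ δ R ι t)
    -- φ is the automorphism of R with φ(p)·x = x·p
    (φ : R ≃+* R) (hφ : ∀ p : R, φ p * ι x = ι x * p)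
    -- red : R → K[t] is the reduction map Σ aᵢ tⁱ ↦ Σ π(aᵢ) Xⁱ
    (red : R →+* Polynomial K)
    (hred : ∀ a : A, red (ι a) = Polynomial.C (π a)) (hredt : red t = Polynomial.X)
    -- f, g, h monic of degrees d, m, d - m
    (d m : ℕ) (hm : m ≤ d) (f g h : R)
    (cf : ℕ → A) (hf : f = t ^ d + ∑ i ∈ Finset.range d, ι (cf i) * t ^ i)
    (cg : ℕ → A) (hg : g = t ^ m + ∑ i ∈ Finset.range m, ι (cg i) * t ^ i)
    (ch : ℕ → A) (hh : h = t ^ (d - m) + ∑ i ∈ Finset.range (d - m), ι (ch i) * t ^ i)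
    -- f̄ = ḡ h̄, and ḡ is coprime to (φⁿ(h))‾ for all n ≥ 1
    (hfgh : red f = red g * red h)
    (hcop : ∀ n : ℕ, 1 ≤ n → IsCoprime (red g) (red ((φ ^ n) h))) :
    ∃ (G H : R) (cG cH : ℕ → A),
      G = t ^ m + ∑ i ∈ Finset.range m, ι (cG i) * t ^ i ∧
      H = t ^ (d - m) + ∑ i ∈ Finset.range (d - m), ι (cH i) * t ^ i ∧
      red G = red g ∧ red H = red h ∧ f = G * H := by
  obtain ⟨l, rfl⟩ := Nat.exists_eq_add_of_le hm
  rw [Nat.add_sub_cancel_left] at *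
  let Gp : ℕ → (ℕ → A) → R := fun m c => t ^ m + ∑ i ∈ Finset.range m, ι (c i) * t ^ i
  have hGp : ∀ m c, SkD ι t m (Gp m c - t ^ m) := fun m c => ⟨c, by simp [Gp]⟩
  have hGp' : ∀ m c, SkD ι t (m + 1) (Gp m c) := fun m c =>
    (SkD.pow (Nat.lt_succ_self m)).add (SkD.mono (Nat.le_succ m) ⟨c, rfl⟩)
  have hfD : SkD ι t (m + l) (f - t ^ (m + l)) := ⟨cf, by rw [hf]; simp⟩
  have hdiff : ∀ c e, SkD ι t (m + l) (f - Gp m c * Gp l e) := fun c e => by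
    have := hfD.sub ((hGp m c).monic_mul hR (hGp l e))
    simpa using this
  have hg' : g = Gp m cg := hg
  have hh' : h = Gp l ch := hh
  have hx0 : π x = 0 := (hker x).2 ⟨1, by simp⟩
  have hredx : red (ι x) = 0 := by rw [hred, hx0, map_zero]
  obtain ⟨r0, hr0, hr0'⟩ := SkD.red_div hred hredt hker (hdiff cg ch)
    (by rw [map_sub, map_mul, hfgh, hg', hh', sub_self])
  by_cases hx : x = 0
  · refine ⟨g, h, cg, ch, hg, hh, rfl, rfl, ?_⟩
    rw [hx, map_zero, zero_mul] at hr0'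
    rw [hg', hh']; exact sub_eq_zero.1 hr0'
  have hpow : ∀ (n : ℕ) (p : R), (φ ^ n) p * ι (x ^ n) = ι (x ^ n) * p := by
    intro n
    induction n with
    | zero => intro p; simp
    | succ n ih =>
      intro p
      have e : (φ ^ (n + 1)) p = (φ ^ n) (φ p) := by rw [pow_succ]; rfl
      rw [e, pow_succ, map_mul, ← mul_assoc, ih, mul_assoc, hφ, mul_assoc]
  have hψ : ∀ (n : ℕ) (p : R), p * ι (x ^ n) = ι (x ^ n) * (φ ^ n).symm p := by
    intro n p
    rw [← hpow n, RingEquiv.apply_symm_apply]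
  have hxn : ∀ n : ℕ, x ^ n ≠ 0 := fun n => pow_ne_zero n hx
  have hψD : ∀ (n k : ℕ) (p : R), SkD ι t k p → SkD ι t k ((φ ^ n).symm p) := by
    intro n k p hp
    refine SkD.of_smul hR (hxn n) ?_
    rw [← hψ]
    exact hp.mul_C hR _
  have hψred : ∀ (n : ℕ) (p : R), red p = 0 → red ((φ ^ n).symm p) = 0 := by
    intro n p hp
    obtain ⟨k, hk⟩ := SkD.exists hR p
    obtain ⟨q, -, rfl⟩ := SkD.red_div hred hredt hker hk hp
    have : (φ ^ n).symm (ι x * q) = ι x * (φ ^ n).symm q := by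
      rw [← sub_eq_zero]
      refine SkD.cancel hR (hxn n) ?_
      rw [mul_sub, ← hψ, mul_assoc, hψ, ← mul_assoc, ← mul_assoc, ← map_mul, ← map_mul,
        ← pow_succ, ← pow_succ', sub_self]
    rw [this, map_mul, hredx, zero_mul]
  have hψred' : ∀ (n : ℕ) (p q : R), red p = red q →
      red ((φ ^ n).symm p) = red ((φ ^ n).symm q) := by
    intro n p q hpq
    have := hψred n (p - q) (by rw [map_sub, hpq, sub_self])
    rwa [map_sub, map_sub, sub_eq_zero] at this
  have hcop' : ∀ n : ℕ, 1 ≤ n → IsCoprime (red ((φ ^ n).symm g)) (red h) := by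
    intro n hn
    obtain ⟨a, b, hab⟩ := hcop n hn
    obtain ⟨a, rfl⟩ := SkD.red_surj hred hredt hπ a
    obtain ⟨b, rfl⟩ := SkD.red_surj hred hredt hπ b
    have := hψred' n (a * g + b * (φ ^ n) h) 1 (by simpa using hab)
    refine ⟨red ((φ ^ n).symm a), red ((φ ^ n).symm b), ?_⟩
    simpa only [map_add, map_mul, map_one, RingEquiv.symm_apply_apply] using this
  have hredh := SkD.red_monic hred hredt (hGp l ch)
  rw [← hh'] at hredh
  let P : ℕ → (ℕ → A) × (ℕ → A) → Prop := fun k s =>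
    red (Gp m s.1) = red g ∧ red (Gp l s.2) = red h ∧
      ∃ r, SkD ι t (m + l) r ∧ f - Gp m s.1 * Gp l s.2 = ι (x ^ (k + 1)) * r
  have hP0 : P 0 (cg, ch) := ⟨by rw [hg'], by rw [hh'], r0, hr0, by simpa using hr0'⟩
  have hstep : ∀ k s, P k s → ∃ s', P (k + 1) s' ∧
      (∀ i, ∃ b, s'.1 i - s.1 i = x ^ k * b) ∧ (∀ i, ∃ b, s'.2 i - s.2 i = x ^ k * b) := by
    rintro k ⟨c, e⟩ ⟨hc, he, r, hr, hfr⟩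
    dsimp only at hc he hfr
    set n := k + 1 with hn
    obtain ⟨u, v, hu, hv, huv⟩ := bezout_bdd (m := m) (l := l)
      (SkD.red_degree hred hredt (hψD n _ _ (hGp' m c))) hredh.1 hredh.2
      (SkD.red_degree hred hredt hr) (by rw [hψred' n _ _ hc]; exact hcop' n (by omega))
    obtain ⟨cu, hcu⟩ := SkD.red_lift hred hredt hπ u hu
    obtain ⟨cv, hcv⟩ := SkD.red_lift hred hredt hπ v hv
    set U := ∑ i ∈ Finset.range m, ι (cu i) * t ^ i with hU
    set V := ∑ i ∈ Finset.range l, ι (cv i) * t ^ i with hV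
    have hUD : SkD ι t m U := ⟨cu, rfl⟩
    have hVD : SkD ι t l V := ⟨cv, rfl⟩
    have e1 : Gp m (fun i => c i + x ^ n * cu i) = Gp m c + ι (x ^ n) * U := by
      simp only [Gp, hU, Finset.mul_sum, map_add, map_mul, add_mul, Finset.sum_add_distrib,
        mul_assoc, add_assoc]
    have e2 : Gp l (fun i => e i + x ^ n * cv i) = Gp l e + ι (x ^ n) * V := by
      simp only [Gp, hV, Finset.mul_sum, map_add, map_mul, add_mul, Finset.sum_add_distrib,
        mul_assoc, add_assoc]
    have hredxn : red (ι (x ^ n)) = 0 := by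
      rw [hn, pow_succ, map_mul, map_mul, hredx, mul_zero]
    have hB : SkD ι t (m + l)
        (r - U * Gp l e - (φ ^ n).symm (Gp m c) * V - U * (ι (x ^ n) * V)) := by
      refine ((hr.sub (hUD.mul_right hR (hGp' l e))).sub
        ((hψD n _ _ (hGp' m c)).mul_left hR hVD)).sub ?_
      exact hUD.mul_right hR ((hVD.smul _).mono (Nat.le_succ l))
    obtain ⟨r', hr', hBr⟩ := SkD.red_div hred hredt hker hB (by
      simp only [map_sub, map_mul, hcu, hcv, he, huv, hredxn]
      ring)
    refine ⟨(fun i => c i + x ^ n * cu i, fun i => e i + x ^ n * cv i), ⟨?_, ?_, r', hr', ?_⟩,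
      ?_, ?_⟩
    · dsimp only
      rw [e1, map_add, map_mul, hredxn, zero_mul, add_zero, hc]
    · dsimp only
      rw [e2, map_add, map_mul, hredxn, zero_mul, add_zero, he]
    · dsimp only
      have e4 : ι (x ^ (n + 1)) * r' = ι (x ^ n) * (ι x * r') := by
        rw [pow_succ, map_mul, mul_assoc]
      rw [e1, e2, e4, ← hBr]
      have e3 := hψ n (Gp m c)
      calc _ = (f - Gp m c * Gp l e) - ι (x ^ n) * U * Gp l e - (Gp m c * ι (x ^ n)) * V
              - ι (x ^ n) * U * (ι (x ^ n) * V) := by noncomm_ring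
        _ = _ := by rw [hfr, e3]; noncomm_ring
    · exact fun i => ⟨x * cu i, by simp [hn, pow_succ, mul_assoc]⟩
    · exact fun i => ⟨x * cv i, by simp [hn, pow_succ, mul_assoc]⟩
  choose! F hF using hstep
  let S : ℕ → (ℕ → A) × (ℕ → A) := fun k => Nat.rec (cg, ch) (fun k s => F k s) k
  have hS : ∀ k, P k (S k) := by
    intro k
    induction k with
    | zero => exact hP0
    | succ k ih => exact (hF k _ ih).1
  have hlim1 : ∀ i, ∃ a : A, ∀ n : ℕ, ∃ b : A, a - (S n).1 i = x ^ n * b := fun i =>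
    hcomp (fun n => (S n).1 i) fun n => (hF n _ (hS n)).2.1 i
  have hlim2 : ∀ i, ∃ a : A, ∀ n : ℕ, ∃ b : A, a - (S n).2 i = x ^ n * b := fun i =>
    hcomp (fun n => (S n).2 i) fun n => (hF n _ (hS n)).2.2 i
  choose cG bG hG using hlim1
  choose cH bH hH using hlim2
  have hGn : ∀ n, ∃ q, Gp m cG - Gp m (S n).1 = ι (x ^ n) * q := by
    intro n
    refine ⟨∑ i ∈ Finset.range m, ι (bG i n) * t ^ i, ?_⟩
    simp only [Gp, add_sub_add_left_eq_sub, ← Finset.sum_sub_distrib, ← sub_mul, ← map_sub, hG,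
      Finset.mul_sum, map_mul, mul_assoc]
  have hHn : ∀ n, ∃ q, Gp l cH - Gp l (S n).2 = ι (x ^ n) * q := by
    intro n
    refine ⟨∑ i ∈ Finset.range l, ι (bH i n) * t ^ i, ?_⟩
    simp only [Gp, add_sub_add_left_eq_sub, ← Finset.sum_sub_distrib, ← sub_mul, ← map_sub, hH,
      Finset.mul_sum, map_mul, mul_assoc]
  refine ⟨Gp m cG, Gp l cH, cG, cH, rfl, rfl, ?_, ?_, ?_⟩
  · obtain ⟨q, hq⟩ := hGn 1
    rw [← (hS 1).1, ← sub_eq_zero, ← map_sub, hq, pow_one, map_mul, hredx, zero_mul]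
  · obtain ⟨q, hq⟩ := hHn 1
    rw [← (hS 1).2.1, ← sub_eq_zero, ← map_sub, hq, pow_one, map_mul, hredx, zero_mul]
  · rw [← sub_eq_zero]
    obtain ⟨c, hc⟩ := hdiff cG cH
    rw [hc]
    refine Finset.sum_eq_zero fun i hi => ?_
    have : c i = 0 := by
      refine hsep _ fun n => ?_
      obtain ⟨q1, hq1⟩ := hGn n
      obtain ⟨q2, hq2⟩ := hHn n
      obtain ⟨-, -, r, -, hr⟩ := hS n
      have key : f - Gp m cG * Gp l cH = ι (x ^ n) *
          (ι x * r - q1 * Gp l cH - (φ ^ n).symm (Gp m (S n).1) * q2) := by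
        have e3 := hψ n (Gp m (S n).1)
        calc _ = (f - Gp m (S n).1 * Gp l (S n).2) - (Gp m cG - Gp m (S n).1) * Gp l cH
              - Gp m (S n).1 * (Gp l cH - Gp l (S n).2) := by noncomm_ring
          _ = ι (x ^ n) * (ι x * r) - ι (x ^ n) * q1 * Gp l cH
              - (Gp m (S n).1 * ι (x ^ n)) * q2 := by
            rw [hr, hq1, hq2, pow_succ, map_mul, mul_assoc, mul_assoc (Gp m (S n).1)]
          _ = _ := by rw [e3]; noncomm_ring
      have hD : SkD ι t (m + l)
          (ι x * r - q1 * Gp l cH - (φ ^ n).symm (Gp m (S n).1) * q2) := by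
        refine SkD.of_smul hR (hxn n) ?_
        rw [← key]; exact hdiff cG cH
      obtain ⟨b, hb⟩ := hD
      refine ⟨b i, ?_⟩
      refine SkD.unique hR (k := m + l) (c := c) (e := fun i => x ^ n * b i) ?_ i
        (by simpa using hi)
      rw [← hc, key, hb]
      simp only [Finset.mul_sum, map_mul, mul_assoc]
    simp [this]
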